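/- Let P ⊆ ℝ^d be a d-dimensional simplicial reflexive polytope with exactly 3d−1 vertices, and let F be a special facet of P. Then H_P(F,i) = ∅ for all i ≥ 2 and all i ≤ −3, |H_P(F,1)| = d, and the triple (|H_P(F,0)|, |H_P(F,−1)|, |H_P(F,−2)|) is one of (d, d−2, 1), (d−1, d, 0), (d, d−1, 0). In the first two cases ν_P = 0, and in the third case ν_P is a lattice point on the facet F. -/

import Mathlib

noncomputable section

/-- The standard inner product on `ℝ^d`. -/
def dotp {d : ℕ} (x y : Fin d → ℝ) : ℝ := ∑ i, x i * y i

/-- `x` is a point of the lattice `ℤ^d`. -/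
def IsLP {d : ℕ} (x : Fin d → ℝ) : Prop := ∀ i, ∃ n : ℤ, x i = (n : ℝ)

/-- A lattice polytope: convex hull of finitely many lattice points. -/
def IsLatticePolytope {d : ℕ} (P : Set (Fin d → ℝ)) : Prop :=
  ∃ V : Finset (Fin d → ℝ), (∀ v ∈ V, IsLP v) ∧ P = convexHull ℝ (V : Set (Fin d → ℝ))

/-- The dual polytope `P* = {x | ⟨x,y⟩ ≤ 1 ∀ y ∈ P}`. -/
def dualPolytope {d : ℕ} (P : Set (Fin d → ℝ)) : Set (Fin d → ℝ) :=
  {x | ∀ y ∈ P, dotp x y ≤ 1}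

/-- `P` is a reflexive polytope: a (`d`-dimensional) lattice polytope with `0` in its
interior whose dual is again a lattice polytope. -/
def IsReflexive {d : ℕ} (P : Set (Fin d → ℝ)) : Prop :=
  IsLatticePolytope P ∧ (0 : Fin d → ℝ) ∈ interior P ∧ IsLatticePolytope (dualPolytope P)

/-- `F` is a facet of `P` with (uniquely determined) outer normal `u`, normalized by
`⟨u, F⟩ = 1` (possible since `0` is in the interior of `P`). -/
def IsFacetNormal {d : ℕ} (P F : Set (Fin d → ℝ)) (u : Fin d → ℝ) : Prop :=
  F.Nonempty ∧ (∀ y ∈ P, dotp u y ≤ 1) ∧ F = {y ∈ P | dotp u y = 1} ∧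
    Module.finrank ℝ (vectorSpan ℝ F) = d - 1

/-- `F` is a facet of `P`. -/
def IsFacet {d : ℕ} (P F : Set (Fin d → ℝ)) : Prop := ∃ u, IsFacetNormal P F u

/-- `P` is simplicial: every facet has exactly `d` vertices. -/
def IsSimplicial {d : ℕ} (P : Set (Fin d → ℝ)) : Prop :=
  ∀ F, IsFacet P F → (Set.extremePoints ℝ F).ncard = d

/-- The functional `⟨u, ·⟩`. -/
def dL {d : ℕ} (u : Fin d → ℝ) : (Fin d → ℝ) →ₗ[ℝ] ℝ where
  toFun := dotp u
  map_add' x y := by simp [dotp, mul_add, Finset.sum_add_distrib]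
  map_smul' c x := by
    simp only [dotp, Pi.smul_apply, smul_eq_mul, RingHom.id_apply, Finset.mul_sum]
    exact Finset.sum_congr rfl fun i _ => by ring

theorem dL_apply {d : ℕ} (u x : Fin d → ℝ) : dL u x = dotp u x := rfl

theorem exists_vec {d : ℕ} (f : (Fin d → ℝ) →ₗ[ℝ] ℝ) : ∃ g : Fin d → ℝ, dL g = f := by
  refine ⟨fun i => f (Pi.single i 1), ?_⟩
  apply LinearMap.pi_ext'
  intro i
  ext
  simp [dL_apply, dotp, Pi.single_apply]

theorem dL_sub_smul {d : ℕ} (u g : Fin d → ℝ) (s : ℝ) (y : Fin d → ℝ) :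
    dotp (u - s • g) y = dotp u y - s * dotp g y := by
  simp only [dotp, Pi.sub_apply, Pi.smul_apply, smul_eq_mul, Finset.mul_sum,
    ← Finset.sum_sub_distrib]
  exact Finset.sum_congr rfl fun i _ => by ring

theorem vectorSpan_le_ker {d : ℕ} (N : Set (Fin d → ℝ)) (u : Fin d → ℝ)
    (hN : ∀ y ∈ N, dotp u y = 1) : vectorSpan ℝ N ≤ LinearMap.ker (dL u) := by
  rw [vectorSpan_def, Submodule.span_le]
  rintro z ⟨a, ha, b, hb, rfl⟩
  change dL u (a - b) = 0
  rw [map_sub, dL_apply, dL_apply, hN a ha, hN b hb,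
    sub_self]

theorem vectorSpan_le_span' {d : ℕ} (N : Set (Fin d → ℝ)) :
    vectorSpan ℝ N ≤ Submodule.span ℝ N := by
  rw [vectorSpan_def, Submodule.span_le]
  rintro z ⟨a, ha, b, hb, rfl⟩
  exact Submodule.sub_mem _ (Submodule.subset_span ha) (Submodule.subset_span hb)

theorem span_top_of_finrank {d : ℕ} (N : Set (Fin d → ℝ)) (u : Fin d → ℝ)
    (hN : ∀ y ∈ N, dotp u y = 1) (hne : N.Nonempty)
    (hr : Module.finrank ℝ (vectorSpan ℝ N) = d - 1) : Submodule.span ℝ N = ⊤ := by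
  obtain ⟨x, hx⟩ := hne
  have hlt : vectorSpan ℝ N < Submodule.span ℝ N := by
    refine lt_of_le_of_ne (vectorSpan_le_span' N) fun h => ?_
    have h1 : x ∈ vectorSpan ℝ N := h ▸ Submodule.subset_span hx
    have h2 := vectorSpan_le_ker N u hN h1
    rw [LinearMap.mem_ker, dL_apply, hN x hx] at h2
    exact one_ne_zero h2
  have h3 := Submodule.finrank_lt_finrank_of_lt hlt
  have h4 := Submodule.finrank_le (Submodule.span ℝ N)
  apply Submodule.eq_top_of_finrank_eq
  rw [Module.finrank_fin_fun] at *
  omega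

theorem finrank_of_span_top {d : ℕ} (N : Set (Fin d → ℝ)) (u : Fin d → ℝ)
    (hN : ∀ y ∈ N, dotp u y = 1) (hne : N.Nonempty)
    (hsp : Submodule.span ℝ N = ⊤) : Module.finrank ℝ (vectorSpan ℝ N) = d - 1 := by
  obtain ⟨x, hx⟩ := hne
  have hlt : vectorSpan ℝ N < ⊤ := by
    refine lt_of_le_of_ne le_top fun h => ?_
    have h1 : x ∈ vectorSpan ℝ N := h ▸ Submodule.mem_top
    have h2 := vectorSpan_le_ker N u hN h1
    rw [LinearMap.mem_ker, dL_apply, hN x hx] at h2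
    exact one_ne_zero h2
  have h3 := Submodule.finrank_lt_finrank_of_lt hlt
  have h5 : (⊤ : Submodule ℝ (Fin d → ℝ)) ≤ vectorSpan ℝ N ⊔ Submodule.span ℝ {x} := by
    rw [← hsp, Submodule.span_le]
    intro y hy
    have : y = (y - x) + x := by abel
    rw [this]
    exact Submodule.add_mem_sup (vsub_mem_vectorSpan ℝ hy hx) (Submodule.mem_span_singleton_self x)
  have h6 := Submodule.finrank_mono h5
  have h7 := Submodule.finrank_add_le_finrank_add_finrank (vectorSpan ℝ N) (Submodule.span ℝ {x})
  have h8 := finrank_span_le_card (R := ℝ) ({x} : Set (Fin d → ℝ))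
  simp only [finrank_top, Module.finrank_fin_fun, Set.toFinset_singleton,
    Finset.card_singleton] at *
  omega

/-- Facet normals are lattice points. -/
theorem normal_isLP {d : ℕ} (P N : Set (Fin d → ℝ)) (u : Fin d → ℝ)
    (hd : IsLatticePolytope (dualPolytope P)) (hu : ∀ y ∈ P, dotp u y ≤ 1)
    (hNP : N ⊆ P) (hN : ∀ y ∈ N, dotp u y = 1)
    (hsp : Submodule.span ℝ N = ⊤) : IsLP u := by
  obtain ⟨W, hW, hPW⟩ := hd
  have hcomm : ∀ a b : Fin d → ℝ, dotp a b = dotp b a := fun a b =>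
    Finset.sum_congr rfl fun i _ => mul_comm _ _
  have hext : u ∈ Set.extremePoints ℝ (dualPolytope P) := by
    rw [mem_extremePoints_iff_left]
    refine ⟨hu, fun a ha b hb hab => ?_⟩
    obtain ⟨α, β, hα, hβ, hαβ, rfl⟩ := hab
    have key : ∀ y ∈ N, dotp a y = 1 := by
      intro y hy
      have h1 := ha y (hNP hy)
      have h2 := hb y (hNP hy)
      have h3 := hN y hy
      have h4 : dotp (α • a + β • b) y = α * dotp a y + β * dotp b y := by
        rw [hcomm, ← dL_apply, map_add, map_smul, map_smul, dL_apply, dL_apply, hcomm y, hcomm y]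
        rfl
      rw [h4] at h3
      have : α * dotp a y ≥ α * 1 := by nlinarith
      exact le_antisymm h1 (le_of_mul_le_mul_left this hα)
    have heq : dL a = dL (α • a + β • b) := by
      apply LinearMap.ext_on hsp
      intro y hy
      rw [dL_apply, dL_apply, key y hy, hN y hy]
    ext i
    have := LinearMap.congr_fun heq (Pi.single i 1)
    simpa [dL_apply, dotp, Pi.single_apply] using this
  rw [hPW] at hext
  exact hW u (extremePoints_convexHull_subset hext)

theorem dotp_int {d : ℕ} (u x : Fin d → ℝ) (hu : IsLP u) (hx : IsLP x) :
    ∃ n : ℤ, dotp u x = n := by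
  choose a ha using hu
  choose b hb using hx
  exact ⟨∑ i, a i * b i, by simp [dotp, ha, hb]⟩

theorem ext_face {d : ℕ} (P : Set (Fin d → ℝ)) (u : Fin d → ℝ) (hu : ∀ y ∈ P, dotp u y ≤ 1) :
    Set.extremePoints ℝ {y ∈ P | dotp u y = 1} =
      {v ∈ Set.extremePoints ℝ P | dotp u v = 1} := by
  have hE : IsExtreme ℝ P {y ∈ P | dotp u y = 1} := by
    refine ⟨fun y hy => hy.1, ?_⟩
    rintro a ha b hb x hx hab
    refine ⟨ha, ?_⟩
    obtain ⟨α, β, hα, hβ, hαβ, rfl⟩ := hab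
    have h3 := hx.2
    rw [← dL_apply, map_add, map_smul, map_smul, dL_apply, dL_apply] at h3
    simp only [smul_eq_mul] at h3
    have h1 := hu a ha
    have h2 := hu b hb
    have : α * dotp u a ≥ α * 1 := by nlinarith
    exact le_antisymm h1 (le_of_mul_le_mul_left this hα)
  rw [hE.extremePoints_eq]
  ext v
  simp only [Set.mem_inter_iff, Set.mem_ofPred_eq]
  exact ⟨fun h => ⟨h.2, h.1.2⟩, fun h => ⟨⟨extremePoints_subset h.1, h.2⟩, h.1⟩⟩

/-- polytope data -/
theorem hull_V {d : ℕ} (P : Set (Fin d → ℝ)) (hP : IsLatticePolytope P)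
    (V : Finset (Fin d → ℝ)) (hV : (V : Set (Fin d → ℝ)) = Set.extremePoints ℝ P) :
    P = convexHull ℝ (V : Set (Fin d → ℝ)) ∧ (∀ v ∈ V, IsLP v) ∧ IsCompact P ∧ Convex ℝ P := by
  obtain ⟨W, hW, hPW⟩ := hP
  have hc : IsCompact P := hPW ▸ W.finite_toSet.isCompact_convexHull ℝ
  have hcv : Convex ℝ P := hPW ▸ convex_convexHull ℝ _
  refine ⟨?_, ?_, hc, hcv⟩
  · have := closure_convexHull_extremePoints hc hcv
    rw [← hV, (V.finite_toSet.isClosed_convexHull ℝ).closure_eq] at this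
    exact this.symm
  · intro v hv
    have h1 : v ∈ Set.extremePoints ℝ P := hV ▸ hv
    rw [hPW] at h1
    exact hW v (extremePoints_convexHull_subset h1)

/-- The vertices of a facet span. -/
theorem span_vertices {d : ℕ} (P : Set (Fin d → ℝ)) (hc : IsCompact P) (hcv : Convex ℝ P)
    (V : Finset (Fin d → ℝ)) (hV : (V : Set (Fin d → ℝ)) = Set.extremePoints ℝ P)
    (F : Set (Fin d → ℝ)) (u : Fin d → ℝ) (hF : IsFacetNormal P F u) :
    Submodule.span ℝ {v | v ∈ V ∧ dotp u v = 1} = ⊤ := by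
  obtain ⟨hne, hu, hFe, hr⟩ := hF
  have h1 := span_top_of_finrank F u (fun y hy => (hFe ▸ hy : y ∈ {y ∈ P | dotp u y = 1}).2) hne hr
  have hcont : Continuous (dotp u) := by
    unfold dotp; fun_prop
  have hFc : IsCompact F := by
    have : F = P ∩ {y | dotp u y = 1} := hFe
    rw [this]
    exact hc.inter_right (isClosed_eq hcont continuous_const)
  have hFcv : Convex ℝ F := by
    have : F = P ∩ (dL u) ⁻¹' {1} := hFe
    rw [this]
    exact hcv.inter ((convex_singleton 1).linear_preimage (dL u))
  have h2 := closure_convexHull_extremePoints hFc hFcv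
  have h3 : Set.extremePoints ℝ F = {v | v ∈ V ∧ dotp u v = 1} := by
    rw [hFe, ext_face P u hu, ← hV]; rfl
  have hfin : (Set.extremePoints ℝ F).Finite := by
    rw [h3]; exact V.finite_toSet.subset fun v hv => hv.1
  rw [(hfin.isClosed_convexHull ℝ).closure_eq, h3] at h2
  rw [eq_top_iff, ← h1, Submodule.span_le, ← h2]
  exact convexHull_min Submodule.subset_span (Submodule.convex _)

theorem key_unique {d : ℕ} (P : Set (Fin d → ℝ)) (hP : IsReflexive P) (hs : IsSimplicial P)
    (V : Finset (Fin d → ℝ)) (hV : (V : Set (Fin d → ℝ)) = Set.extremePoints ℝ P)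
    (u : Fin d → ℝ) (hu : ∀ y ∈ P, dotp u y ≤ 1)
    (B : Finset (Fin d → ℝ)) (hB : ∀ v, v ∈ B ↔ v ∈ V ∧ dotp u v = 1) (hBd : B.card = d)
    (hsp : Submodule.span ℝ (B : Set (Fin d → ℝ)) = ⊤)
    (g v : Fin d → ℝ) (hv : v ∈ B) (hgv : 0 ≤ dotp g v) (hg : ∀ b ∈ B, b ≠ v → dotp g b = 0)
    (x y : Fin d → ℝ) (hx : x ∈ V) (hy : y ∈ V) (hx0 : dotp u x = 0) (hy0 : dotp u y = 0)
    (hgx : dotp g x < 0) (hgy : dotp g y < 0) : x = y := by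
  classical
  obtain ⟨hPV, hVL, hc, hcv⟩ := hull_V P hP.1 V hV
  have hVP : ∀ z ∈ V, z ∈ P := fun z hz => extremePoints_subset (hV ▸ hz : z ∈ Set.extremePoints ℝ P)
  have hgB : ∀ b ∈ B, 0 ≤ dotp g b := by
    intro b hb
    by_cases h : b = v
    · rwa [h]
    · exact (hg b hb h).ge
  obtain ⟨w, hw, hmin⟩ := Finset.exists_min_image (V.filter fun z => dotp g z < 0)
    (fun z => (1 - dotp u z) / (- dotp g z)) ⟨x, by simp [hx, hgx]⟩
  simp only [Finset.mem_filter] at hw hmin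
  set s := (1 - dotp u w) / (- dotp g w) with hsdef
  have hwB : w ∉ B := fun h => absurd (hgB w h) (not_le.2 hw.2)
  have huw : dotp u w < 1 := lt_of_le_of_ne (hu w (hVP w hw.1)) fun h => hwB ((hB w).2 ⟨hw.1, h⟩)
  have hspos : 0 < s := div_pos (by linarith) (by linarith [hw.2])
  set u' := u - s • g with hu'
  have hu'e : ∀ z, dotp u' z = dotp u z - s * dotp g z := dL_sub_smul u g s
  have hu'V : ∀ z ∈ V, dotp u' z ≤ 1 := by
    intro z hz
    rw [hu'e]
    by_cases h : dotp g z < 0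
    · have := hmin z ⟨hz, h⟩
      rw [le_div_iff₀ (by linarith)] at this
      linarith
    · have := hu z (hVP z hz)
      have := mul_nonneg hspos.le (not_lt.1 h)
      linarith
  have hu'P : ∀ z ∈ P, dotp u' z ≤ 1 := by
    have : P ⊆ (dL u') ⁻¹' Set.Iic 1 := by
      rw [hPV]
      exact convexHull_min (fun z hz => hu'V z hz) ((convex_Iic (1:ℝ)).linear_preimage (dL u'))
    exact fun z hz => this hz
  have hu'w : dotp u' w = 1 := by
    have : s * (- dotp g w) = 1 - dotp u w := div_mul_cancel₀ _ (by linarith [hw.2])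
    rw [hu'e]; linarith
  have hu'B : ∀ b ∈ B, b ≠ v → dotp u' b = 1 := by
    intro b hb hbv
    rw [hu'e, hg b hb hbv, ((hB b).1 hb).2]; ring
  set N : Set (Fin d → ℝ) := {y ∈ P | dotp u' y = 1} with hN
  have hwN : w ∈ N := ⟨hVP w hw.1, hu'w⟩
  have hBN : ∀ b ∈ B, b ≠ v → b ∈ N := fun b hb hbv =>
    ⟨hVP b ((hB b).1 hb).1, hu'B b hb hbv⟩
  have hNsp : Submodule.span ℝ N = ⊤ := by
    have hBe : ((B.erase v : Finset (Fin d → ℝ)) : Set (Fin d → ℝ)) ⊆ N := fun b hb => by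
      simp only [Finset.coe_erase, Set.mem_sdiff, Set.mem_singleton_iff, Finset.mem_coe] at hb
      exact hBN b hb.1 hb.2
    have hwt : w ∈ Submodule.span ℝ (insert v ((B.erase v : Finset (Fin d → ℝ)) : Set (Fin d → ℝ))) := by
      rw [← Finset.coe_insert, Finset.insert_erase hv, hsp]; trivial
    rw [Submodule.mem_span_insert] at hwt
    obtain ⟨a, z, hz, hwe⟩ := hwt
    have hgz : z ∈ LinearMap.ker (dL g) := by
      refine (Submodule.span_le.2 ?_) hz
      intro b hb
      simp only [Finset.coe_erase, Set.mem_sdiff, Set.mem_singleton_iff, Finset.mem_coe] at hb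
      exact hg b hb.1 hb.2
    have ha : a ≠ 0 := by
      rintro rfl
      rw [zero_smul, zero_add] at hwe
      subst hwe
      exact absurd hgz (by rw [LinearMap.mem_ker, dL_apply]; exact hw.2.ne)
    have hvN : v ∈ Submodule.span ℝ N := by
      have : v = a⁻¹ • (w - z) := by rw [hwe, add_sub_cancel_right, smul_smul, inv_mul_cancel₀ ha, one_smul]
      rw [this]
      exact Submodule.smul_mem _ _ (Submodule.sub_mem _ (Submodule.subset_span hwN)
        (Submodule.span_mono hBe hz))
    rw [eq_top_iff, ← hsp, Submodule.span_le]
    intro b hb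
    by_cases h : b = v
    · rw [h]; exact hvN
    · exact Submodule.subset_span (hBN b hb h)
  have hNone : ∀ y ∈ N, dotp u' y = 1 := fun y hy => hy.2
  have hfac : IsFacetNormal P N u' :=
    ⟨⟨w, hwN⟩, hu'P, rfl, finrank_of_span_top N u' hNone ⟨w, hwN⟩ hNsp⟩
  have hLP : IsLP u' := normal_isLP P N u' hP.2.2 hu'P (fun y hy => hy.1) hNone hNsp
  have hncard := hs N ⟨u', hfac⟩
  rw [hN, ext_face P u' hu'P, ← hV] at hncard
  have hset : {z ∈ (V : Set (Fin d → ℝ)) | dotp u' z = 1} =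
      ((V.filter fun z => dotp u' z = 1 : Finset (Fin d → ℝ)) : Set (Fin d → ℝ)) := by
    ext z; simp
  rw [hset, Set.ncard_coe_finset] at hncard
  have hone : ∀ z ∈ V, dotp u z = 0 → dotp g z < 0 → dotp u' z = 1 := by
    intro z hz hz0 hgz
    obtain ⟨n, hn⟩ := dotp_int u' z hLP (hVL z hz)
    have h1 := hu'V z hz
    have h2 : 0 < dotp u' z := by rw [hu'e, hz0]; nlinarith
    rw [hn] at h1 h2 ⊢
    have h1' : n ≤ 1 := by exact_mod_cast h1
    have h2' : 0 < n := by exact_mod_cast h2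
    have : n = 1 := by omega
    simp [this]
  by_contra hxy
  have hnB : ∀ z, dotp u z = 0 → z ∉ B := fun z hz hzB => by
    have := ((hB z).1 hzB).2
    linarith
  have hsub : insert x (insert y (B.erase v)) ⊆ V.filter fun z => dotp u' z = 1 := by
    intro z hz
    simp only [Finset.mem_insert, Finset.mem_erase] at hz
    rw [Finset.mem_filter]
    rcases hz with rfl | rfl | ⟨h1, h2⟩
    · exact ⟨hx, hone _ hx hx0 hgx⟩
    · exact ⟨hy, hone _ hy hy0 hgy⟩
    · exact ⟨((hB z).1 h2).1, hu'B z h2 h1⟩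
  have hle := Finset.card_le_card hsub
  rw [Finset.card_insert_of_notMem (by simp [hxy, hnB x hx0]),
    Finset.card_insert_of_notMem (by simp [hnB y hy0]), Finset.card_erase_of_mem hv, hncard, hBd] at hle
  have : 0 < B.card := Finset.card_pos.2 ⟨v, hv⟩
  omega

theorem card_zero_le {d : ℕ} (P : Set (Fin d → ℝ)) (hP : IsReflexive P) (hs : IsSimplicial P)
    (V : Finset (Fin d → ℝ)) (hV : (V : Set (Fin d → ℝ)) = Set.extremePoints ℝ P)
    (u : Fin d → ℝ) (hu : ∀ y ∈ P, dotp u y ≤ 1)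
    (B : Finset (Fin d → ℝ)) (hB : ∀ v, v ∈ B ↔ v ∈ V ∧ dotp u v = 1) (hBd : B.card = d)
    (hsp : Submodule.span ℝ (B : Set (Fin d → ℝ)) = ⊤)
    (hV0 : (0 : Fin d → ℝ) ∉ V) (hd : 0 < d)
    (Z : Finset (Fin d → ℝ)) (hZ : ∀ v, v ∈ Z ↔ v ∈ V ∧ dotp u v = 0) : Z.card ≤ d := by
  classical
  have hli : LinearIndependent ℝ (fun b : B => (b : Fin d → ℝ)) :=
    linearIndependent_of_top_le_span_of_card_eq_finrank (by simp [hsp]) (by simp [hBd])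
  let b : Module.Basis B ℝ (Fin d → ℝ) := Module.Basis.mk hli (by simp [hsp])
  have hb : ∀ i, b i = i := fun i => Module.Basis.mk_apply hli _ i
  choose g hg using fun i : B => exists_vec (b.coord i)
  have hgd : ∀ i x, dotp (g i) x = b.repr x i := fun i x => by
    rw [← dL_apply, hg]; rfl
  have hex : ∀ x ∈ Z, ∃ i : B, dotp (g i) x < 0 := by
    intro x hx
    by_contra! hcon
    have hx' := (hZ x).1 hx
    have h1 : ∑ i, b.repr x i = 0 := by
      have h2 := congrArg (dL u) (b.sum_repr x)
      rw [map_sum, dL_apply, hx'.2] at h2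
      rw [← h2]
      refine Finset.sum_congr rfl fun i _ => ?_
      rw [map_smul, hb, dL_apply, ((hB i).1 i.2).2]; simp
    have h3 := (Finset.sum_eq_zero_iff_of_nonneg fun i _ => by rw [← hgd]; exact hcon i).1 h1
    have : x = 0 := by
      rw [← b.sum_repr x]
      exact Finset.sum_eq_zero fun i hi => by rw [h3 i hi, zero_smul]
    exact hV0 (this ▸ hx'.1)
  have hBne : Nonempty B := (Finset.card_pos.1 (hBd.symm ▸ hd)).to_subtype
  choose! φ hφ using hex
  have hinj : Set.InjOn φ Z := by
    intro x hx y hy hxy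
    have hx' := (hZ x).1 hx
    have hy' := (hZ y).1 hy
    refine key_unique P hP hs V hV u hu B hB hBd hsp (g (φ x)) (φ x) (φ x).2 ?_ ?_ x y
      hx'.1 hy'.1 hx'.2 hy'.2 (hφ x hx) (hxy ▸ hφ y hy)
    · rw [hgd, ← hb, b.repr_self]; simp
    · intro c hc hne
      have : c = b ⟨c, hc⟩ := (hb ⟨c, hc⟩).symm
      rw [hgd, this, b.repr_self, Finsupp.single_apply, if_neg]
      intro h
      exact hne (congrArg Subtype.val h)
  have := Finset.card_le_card_of_injOn (t := Finset.univ) φ (fun _ _ => Finset.mem_univ _) hinj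
  simpa [hBd] using this

/-- Pure counting. -/
theorem counting {α : Type*} [DecidableEq α] (V : Finset α) (h : α → ℤ) (d : ℕ) (t : ℤ)
    (hd : 0 < d) (hle : ∀ v ∈ V, h v ≤ 1) (hcard : V.card = 3 * d - 1)
    (h1 : (V.filter fun v => h v = 1).card = d) (h0 : (V.filter fun v => h v = 0).card ≤ d)
    (ht : ∑ v ∈ V, h v = t) (ht0 : 0 ≤ t) :
    (∀ v ∈ V, -2 ≤ h v) ∧
    (((V.filter fun v => h v = 0).card = d ∧ (V.filter fun v => h v = -1).card = d - 2 ∧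
      (V.filter fun v => h v = -2).card = 1 ∧ t = 0) ∨
     ((V.filter fun v => h v = 0).card = d - 1 ∧ (V.filter fun v => h v = -1).card = d ∧
      (V.filter fun v => h v = -2).card = 0 ∧ t = 0) ∨
     ((V.filter fun v => h v = 0).card = d ∧ (V.filter fun v => h v = -1).card = d - 1 ∧
      (V.filter fun v => h v = -2).card = 0 ∧ t = 1)) := by
  have e1 : ((V.filter fun v => h v = 1).card : ℤ) = ∑ v ∈ V, if h v = 1 then 1 else 0 := by simp
  have e0 : ((V.filter fun v => h v = 0).card : ℤ) = ∑ v ∈ V, if h v = 0 then 1 else 0 := by simp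
  have em1 : ((V.filter fun v => h v = -1).card : ℤ) = ∑ v ∈ V, if h v = -1 then 1 else 0 := by simp
  have em2 : ((V.filter fun v => h v = -2).card : ℤ) = ∑ v ∈ V, if h v = -2 then 1 else 0 := by simp
  have ec : (V.card : ℤ) = ∑ v ∈ V, 1 := by simp
  -- excess over level -1, at least 2 for a vertex below level -2
  have hA : ∑ v ∈ V, (2 * (if h v = 1 then (1:ℤ) else 0) + (if h v = 0 then 1 else 0) - 1 - h v) =
      2 * d + (V.filter fun v => h v = 0).card - (3 * d - 1) - t := by
    rw [Finset.sum_sub_distrib, Finset.sum_sub_distrib, Finset.sum_add_distrib, ← Finset.mul_sum,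
      ← e1, ← e0, ← ec, ht, h1, hcard]
    push_cast [Nat.cast_sub (show 1 ≤ 3 * d by omega)]
    ring
  have hnn : ∀ v ∈ V, 0 ≤ 2 * (if h v = 1 then (1:ℤ) else 0) + (if h v = 0 then 1 else 0) - 1 - h v := by
    intro v hv
    have := hle v hv
    split_ifs <;> omega
  have hm2 : ∀ v ∈ V, -2 ≤ h v := by
    intro v hv
    have := Finset.single_le_sum hnn hv
    rw [hA] at this
    split_ifs at this <;> omega
  refine ⟨hm2, ?_⟩
  have hB : ∑ v ∈ V, (2 * (if h v = 1 then (1:ℤ) else 0) + (if h v = 0 then 1 else 0) - 1 - h v) =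
      (V.filter fun v => h v = -2).card := by
    rw [em2]
    refine Finset.sum_congr rfl fun v hv => ?_
    have := hle v hv
    have := hm2 v hv
    split_ifs <;> omega
  have hC : (V.card : ℤ) = (V.filter fun v => h v = 1).card + (V.filter fun v => h v = 0).card +
      (V.filter fun v => h v = -1).card + (V.filter fun v => h v = -2).card := by
    rw [e1, e0, em1, em2, ec, ← Finset.sum_add_distrib, ← Finset.sum_add_distrib,
      ← Finset.sum_add_distrib]
    refine Finset.sum_congr rfl fun v hv => ?_
    have := hle v hv
    have := hm2 v hv
    split_ifs <;> omega
  omega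

/-- for a special facet `F` of a `d`-dimensional simplicial reflexive polytope
with `3d-1` vertices: `H_P(F,i) = ∅` for `i ≥ 2` and `i ≤ -3`, `|H_P(F,1)| = d`, and
`(|H_P(F,0)|, |H_P(F,-1)|, |H_P(F,-2)|)` is `(d, d-2, 1)`, `(d-1, d, 0)` or `(d, d-1, 0)`;
in the first two cases `ν_P = 0`, in the third `ν_P` is a lattice point on `F`. -/
theorem stmt17 {d : ℕ} (P : Set (Fin d → ℝ)) (hP : IsReflexive P) (hs : IsSimplicial P)
    (hcard : (Set.extremePoints ℝ P).ncard = 3 * d - 1)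
    (V : Finset (Fin d → ℝ)) (hV : (V : Set (Fin d → ℝ)) = Set.extremePoints ℝ P)
    (F : Set (Fin d → ℝ)) (u : Fin d → ℝ) (hF : IsFacetNormal P F u)
    (hspec : ∃ t : ℝ, 0 ≤ t ∧ ∃ x ∈ F, (∑ v ∈ V, v) = t • x) :
    (∀ i : ℤ, (2 ≤ i ∨ i ≤ -3) →
      {v ∈ Set.extremePoints ℝ P | dotp u v = (i : ℝ)} = ∅) ∧
    {v ∈ Set.extremePoints ℝ P | dotp u v = 1}.ncard = d ∧
    (({v ∈ Set.extremePoints ℝ P | dotp u v = 0}.ncard = d ∧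
        {v ∈ Set.extremePoints ℝ P | dotp u v = -1}.ncard = d - 2 ∧
        {v ∈ Set.extremePoints ℝ P | dotp u v = -2}.ncard = 1 ∧
        (∑ v ∈ V, v) = 0) ∨
      ({v ∈ Set.extremePoints ℝ P | dotp u v = 0}.ncard = d - 1 ∧
        {v ∈ Set.extremePoints ℝ P | dotp u v = -1}.ncard = d ∧
        {v ∈ Set.extremePoints ℝ P | dotp u v = -2}.ncard = 0 ∧
        (∑ v ∈ V, v) = 0) ∨
      ({v ∈ Set.extremePoints ℝ P | dotp u v = 0}.ncard = d ∧
        {v ∈ Set.extremePoints ℝ P | dotp u v = -1}.ncard = d - 1 ∧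
        {v ∈ Set.extremePoints ℝ P | dotp u v = -2}.ncard = 0 ∧
        (∑ v ∈ V, v) ∈ F ∧ IsLP (∑ v ∈ V, v))) := by
  classical
  obtain ⟨hPV, hVL, hc, hcv⟩ := hull_V P hP.1 V hV
  have hVP : ∀ z ∈ V, z ∈ P := fun z hz => extremePoints_subset (hV ▸ hz : z ∈ Set.extremePoints ℝ P)
  have hspan := span_vertices P hc hcv V hV F u hF
  have hext := hs F ⟨u, hF⟩
  obtain ⟨hne, hu, hFe, hr⟩ := hF
  have hF1 : ∀ y ∈ F, dotp u y = 1 := fun y hy => (hFe ▸ hy : y ∈ {y ∈ P | dotp u y = 1}).2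
  have hFP : ∀ y ∈ F, y ∈ P := fun y hy => (hFe ▸ hy : y ∈ {y ∈ P | dotp u y = 1}).1
  have hd : 0 < d := by
    rcases Nat.eq_zero_or_pos d with rfl | h
    · obtain ⟨y, hy⟩ := hne
      have := hF1 y hy
      simp [dotp] at this
    · exact h
  have hLP : IsLP u := normal_isLP P F u hP.2.2 hu hFP hF1 (span_top_of_finrank F u hF1 hne hr)
  -- zero is not a vertex
  have hV0 : (0 : Fin d → ℝ) ∉ V := by
    intro h0
    have h0 : (0 : Fin d → ℝ) ∈ Set.extremePoints ℝ P := hV ▸ h0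
    obtain ⟨y, hy⟩ := hne
    have hnhds : P ∈ nhds (0 : Fin d → ℝ) := mem_interior_iff_mem_nhds.1 hP.2.1
    have hcont : Filter.Tendsto (fun s : ℝ => (-s) • y) (nhds 0) (nhds 0) := by
      have : Continuous (fun s : ℝ => (-s) • y) := by fun_prop
      simpa using this.tendsto 0
    obtain ⟨ε, hε, hball⟩ := Metric.eventually_nhds_iff.1 (hcont.eventually hnhds)
    have hmem : (-(ε / 2)) • y ∈ P := hball (by
      rw [Real.dist_eq, sub_zero, abs_of_pos (by linarith)]; linarith)
    rw [mem_extremePoints_iff_left] at h0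
    have hz := h0.2 y (hFP y hy) _ hmem ⟨(ε/2) / (1 + ε/2), 1 / (1 + ε/2), by positivity, by positivity,
      by field_simp; ring, by
        rw [smul_smul, ← add_smul]
        have : (ε/2) / (1 + ε/2) + 1 / (1 + ε/2) * -(ε/2) = 0 := by field_simp; ring
        rw [this, zero_smul]⟩
    have := hF1 y hy
    rw [hz, ← dL_apply, map_zero] at this
    exact zero_ne_one this
  choose! h hh using fun v (hv : v ∈ V) => dotp_int u v hLP (hVL v hv)
  have hlev : ∀ i : ℤ, {v ∈ Set.extremePoints ℝ P | dotp u v = (i : ℝ)} =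
      ((V.filter fun v => h v = i : Finset (Fin d → ℝ)) : Set (Fin d → ℝ)) := by
    intro i
    rw [← hV]
    ext v
    simp only [Finset.coe_filter, Set.mem_ofPred_eq, Finset.mem_coe]
    refine and_congr_right fun hv => ?_
    rw [hh v hv]
    exact Int.cast_inj
  have hl1 := hlev 1
  have hl0 := hlev 0
  have hlm1 := hlev (-1)
  have hlm2 := hlev (-2)
  simp only [Int.cast_one, Int.cast_zero, Int.cast_neg, Int.cast_ofNat] at hl1 hl0 hlm1 hlm2
  have hVcard : V.card = 3 * d - 1 := by rw [← hcard, ← hV, Set.ncard_coe_finset]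
  have hBcard : (V.filter fun v => h v = 1).card = d := by
    rw [← Set.ncard_coe_finset, ← hl1, ← ext_face P u hu, ← hFe, hext]
  have hBmem : ∀ v, v ∈ V.filter (fun v => h v = 1) ↔ v ∈ V ∧ dotp u v = 1 := by
    intro v
    rw [Finset.mem_filter]
    refine and_congr_right fun hv => ?_
    rw [hh v hv]; norm_cast
  have hZmem : ∀ v, v ∈ V.filter (fun v => h v = 0) ↔ v ∈ V ∧ dotp u v = 0 := by
    intro v
    rw [Finset.mem_filter]
    refine and_congr_right fun hv => ?_
    rw [hh v hv]; norm_cast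
  have hBsp : Submodule.span ℝ ((V.filter (fun v => h v = 1) : Finset (Fin d → ℝ)) :
      Set (Fin d → ℝ)) = ⊤ := by
    rw [← hspan]; congr 1; ext v; exact hBmem v
  have hZcard := card_zero_le P hP hs V hV u hu _ hBmem hBcard hBsp hV0 hd _ hZmem
  have hle : ∀ v ∈ V, h v ≤ 1 := fun v hv => by
    have := hu v (hVP v hv)
    rw [hh v hv] at this
    exact_mod_cast this
  obtain ⟨t, ht, x, hx, hν⟩ := hspec
  have hsum : ((∑ v ∈ V, h v : ℤ) : ℝ) = t := by
    have h2 := congrArg (dL u) hν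
    rw [map_sum, map_smul, dL_apply, hF1 x hx, smul_eq_mul, mul_one] at h2
    rw [← h2]
    push_cast
    exact Finset.sum_congr rfl fun v hv => (hh v hv).symm
  have ht0 : 0 ≤ ∑ v ∈ V, h v := by
    rw [← hsum] at ht; exact_mod_cast ht
  obtain ⟨hm2, hcases⟩ := counting V h d _ hd hle hVcard hBcard hZcard rfl ht0
  refine ⟨?_, ?_, ?_⟩
  · intro i hi
    rw [hlev i, Finset.coe_eq_empty, Finset.filter_eq_empty_iff]
    intro v hv hvi
    have := hle v hv
    have := hm2 v hv
    omega
  · rw [hl1, Set.ncard_coe_finset, hBcard]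
  · rw [hl0, hlm1, hlm2]
    simp only [Set.ncard_coe_finset]
    rcases hcases with ⟨a, b, c, e⟩ | ⟨a, b, c, e⟩ | ⟨a, b, c, e⟩
    · refine Or.inl ⟨a, b, c, ?_⟩
      rw [hν, ← hsum, e]; simp
    · refine Or.inr (Or.inl ⟨a, b, c, ?_⟩)
      rw [hν, ← hsum, e]; simp
    · refine Or.inr (Or.inr ⟨a, b, c, ?_, ?_⟩)
      · rw [hν, ← hsum, e]; simpa using hx
      · intro i
        choose! n hn using hVL
        refine ⟨∑ v ∈ V, n v i, ?_⟩
        rw [Finset.sum_apply]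
        push_cast
        exact Finset.sum_congr rfl fun v hv => hn v hv i
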